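/- Let d ≥ 2, let P be a finite poset, and let A be a permutation d-matrix of size |P|^d whose 1-entries are in a bijection β with the elements of P such that p <_P p' iff every coordinate of the position of β(p) is strictly smaller than the corresponding coordinate of the position of β(p'). Let K be a nonnegative real with ex_d(n, A) ≤ K·n^{d−1} for all positive integers n. Then every induced P-free family F of subsets of [n] satisfies the shifted Lubell bound ∑_{F ∈ F} 1 / C(n + 2d − 2, |F| + d − 1) ≤ K · (d−1)! / (d−1)^{d−1}. -/

import Mathlib

/-!
Arrange `[n]` into `d` ordered lists of lengths `c₁, …, c_d` with `∑ c_j = n`. A grid point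
`(i₁, …, i_d)`, `0 ≤ i_j ≤ c_j`, selects the union of the initial segments of lengths `i_j`, and
inclusion of these unions is the coordinatewise order. Hence the grid points whose union lies in `F`
form a hypermatrix of size `(c₁ + 1) × ⋯ × (c_d + 1)`, which is `A`-free because a copy of `A` would
be an induced copy of `P` in `F` (`not_matContains_traceMatrix`).

The hypothesis on cubes yields at most `K ∏ s_j` 1-entries in an `A`-free box, the product
over all sides `s_j` but the shortest, by averaging over subcubes; AM-GM bounds this by
`K ((∑ s_j) / (d - 1)) ^ (d - 1)` (`ones_le_of_cube_bound`), where `∑ s_j = n + d` here.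

Summing over all `n! C(n + d - 1, d - 1)` arrangements, a set of size `k` is counted
`k! (n - k)! C(k + d - 1, d - 1) C(n - k + d - 1, d - 1)` times (`sum_factorial_le`), which is
`(n + 2d - 2)! / ((d - 1)!² C(n + 2d - 2, k + d - 1))`. The theorem follows from
`(n + d - 1)! (n + d) ^ (d - 1) ≤ (n + 2d - 2)!`. Below, `e` stands for `d - 1`.
-/

/-- Number of 1-entries of a 0-1 hypermatrix. -/
def ones {ι : Type*} [Fintype ι] [DecidableEq ι] {nn : ι → ℕ}
    (M : (∀ j, Fin (nn j)) → Bool) : ℕ :=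
  (Finset.univ.filter fun i => M i = true).card

/-- The hypermatrix `M` contains the hypermatrix `A`: there are strictly increasing
maps, one for each coordinate, sending 1-entries of `A` to 1-entries of `M`. -/
def MatContains {ι : Type*} {kk nn : ι → ℕ}
    (M : (∀ j, Fin (nn j)) → Bool) (A : (∀ j, Fin (kk j)) → Bool) : Prop :=
  ∃ f : ∀ j, Fin (kk j) → Fin (nn j), (∀ j, StrictMono (f j)) ∧
    ∀ i, A i = true → M (fun j => f j (i j)) = true

/-- A permutation d-matrix of size k^d: exactly `k` ones, and for each coordinate
direction `j` and each value `v` there is exactly one 1-entry with j-th coordinate `v`. -/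
def IsPermMatrix {d k : ℕ} (A : (Fin d → Fin k) → Bool) : Prop :=
  (Finset.univ.filter fun i => A i = true).card = k ∧
    ∀ (j : Fin d) (v : Fin k), ∃! i : Fin d → Fin k, A i = true ∧ i j = v

/-- The extremal number: the maximum number of 1-entries of an `A`-free
hypermatrix of size `nn`. -/
noncomputable def exd {ι : Type*} [Fintype ι] [DecidableEq ι] (nn : ι → ℕ) {kk : ι → ℕ}
    (A : (∀ j, Fin (kk j)) → Bool) : ℕ :=
  sSup {m : ℕ | ∃ M : (∀ j, Fin (nn j)) → Bool, ¬ MatContains M A ∧ ones M = m}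

/-- The family `F` of subsets of `[n]` contains the poset `P` as an induced subposet. -/
def ContainsInduced (P : Type*) [PartialOrder P] {n : ℕ}
    (F : Finset (Finset (Fin n))) : Prop :=
  ∃ α : P → Finset (Fin n), Function.Injective α ∧ (∀ p, α p ∈ F) ∧
    ∀ x y : P, x < y ↔ α x ⊂ α y

open Finset
open scoped Nat

/-! ### Counting bijections and weak compositions -/

/-- A bijection `X ≃ Y` carrying `S` onto `T` amounts to a numbering of `X` of which `S` is a
prefix, once a numbering of `Y` with prefix `T` is fixed. -/
theorem card_equiv_mapping {X Y : Type*} [Fintype X] [Fintype Y] [DecidableEq X] [DecidableEq Y]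
    (hXY : Fintype.card X = Fintype.card Y) (S : Finset X) (T : Finset Y) (hST : #S = #T) :
    #{σ : X ≃ Y | ∀ x, x ∈ S ↔ σ x ∈ T} = (#S)! * (Fintype.card X - #S)! := by
  obtain ⟨σ₀⟩ := Fintype.card_eq.1 hXY
  have hne : (Numbering.prefixed (T.map σ₀.symm.toEmbedding)).Nonempty := by
    rw [← Finset.card_pos, Numbering.card_prefixed]
    positivity
  obtain ⟨e, he⟩ := hne
  rw [Numbering.mem_prefixed] at he
  rw [← Numbering.card_prefixed]
  refine Finset.card_equiv (Equiv.equivCongr (Equiv.refl X) (σ₀.symm.trans e)) fun σ => ?_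
  rw [Numbering.mem_prefixed]
  simp only [mem_filter, mem_univ, true_and]
  refine forall_congr' fun x => ?_
  have h := he (σ₀.symm (σ x))
  simp only [card_map, ← hST] at h
  simp only [mem_map_equiv, Equiv.symm_symm, Equiv.apply_symm_apply] at h
  rw [h]
  rfl

/-- Stars and bars: the number of weak compositions of `n` into `e + 1` parts. -/
theorem card_piAntidiag_fin (e n : ℕ) :
    #(piAntidiag (univ : Finset (Fin (e + 1))) n) = (n + e).choose e := by
  rw [← Finset.map_sym_eq_piAntidiag, card_map, Finset.sym_univ, card_univ, Sym.card_sym_eq_choose]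
  simp only [Fintype.card_fin]
  rw [show e + 1 + n - 1 = n + e by omega, Nat.choose_symm_add]

/-! ### Hypermatrices with unequal sides -/

theorem ones_le_exd {d k : ℕ} {nn : Fin d → ℕ} (A : (Fin d → Fin k) → Bool)
    (M : (∀ j, Fin (nn j)) → Bool) (hM : ¬ MatContains M A) :
    ones M ≤ exd nn A := by
  refine le_csSup ⟨Fintype.card (∀ j, Fin (nn j)), ?_⟩ ⟨M, hM, rfl⟩
  rintro _ ⟨M', _, rfl⟩
  exact Finset.card_le_univ _


/-- A point of `Fin N` lies in a proportion `m / N` of the `m`-subsets; stated without division. -/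
theorem card_powersetCard_mem {N m : ℕ} (hm : 0 < m) (x : Fin N) :
    #{S ∈ powersetCard m (univ : Finset (Fin N)) | x ∈ S} * N = N.choose m * m := by
  obtain ⟨m, rfl⟩ : ∃ k, m = k + 1 := ⟨m - 1, by omega⟩
  obtain ⟨N, rfl⟩ : ∃ k, N = k + 1 := ⟨N - 1, by have := x.2; omega⟩
  have h1 : {S ∈ powersetCard (m + 1) (univ : Finset (Fin (N + 1))) | x ∈ S} =
      (powersetCard m ((univ : Finset (Fin (N + 1))) \ {x})).image (· ∪ {x}) := by
    rw [← show m + 1 - #({x} : Finset (Fin (N + 1))) = m by simp,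
      ← filter_powersetCard_subset {x} univ (m + 1) (by simp) (by simp)]
    simp
  rw [h1, card_image_of_injOn, card_powersetCard, card_univ_sdiff, card_singleton,
    Fintype.card_fin, Nat.add_sub_cancel, mul_comm, Nat.add_one_mul_choose_eq]
  intro S hS T hT h
  simp only [mem_coe, mem_powersetCard, subset_sdiff, disjoint_singleton_right] at hS hT
  ext y
  have := congrArg (y ∈ ·) h
  by_cases hy : y = x
  · simp [hy, hS.1.2, hT.1.2]
  · simpa [hy] using this

/-- Averaging over all `m × ⋯ × m` submatrices: a 1-entry of `M` survives in a proportion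
`∏ j, m / nn j` of them, and each of them is `A`-free. -/
theorem ones_mul_pow_le {d k m : ℕ} {nn : Fin d → ℕ} (A : (Fin d → Fin k) → Bool)
    (M : (∀ j, Fin (nn j)) → Bool) (hM : ¬ MatContains M A) (hm : 0 < m)
    (hmn : ∀ j, m ≤ nn j) :
    ones M * m ^ d ≤ exd (fun _ : Fin d => m) A * ∏ j, nn j := by
  classical
  let W : Finset (∀ j, Finset (Fin (nn j))) :=
    Fintype.piFinset fun j => powersetCard m univ
  have hWcard : #W = ∏ j, (nn j).choose m := by simp [W]
  have hWpos : 0 < #W := by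
    rw [hWcard]; exact prod_pos fun j _ => Nat.choose_pos (hmn j)
  -- the submatrix on the index sets `S j` is an `A`-free cube of side `m`
  have hS : ∀ S ∈ W, #{i | M i = true ∧ ∀ j, i j ∈ S j} ≤ exd (fun _ : Fin d => m) A := by
    intro S hS
    have hc : ∀ j, #(S j) = m := fun j =>
      (mem_powersetCard.1 (Fintype.mem_piFinset.1 hS j)).2
    let f : ∀ j, Fin m ↪o Fin (nn j) := fun j => (S j).orderEmbOfFin (hc j)
    let M' : (∀ _ : Fin d, Fin m) → Bool := fun t => M fun j => f j (t j)
    have hM' : ¬ MatContains M' A := by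
      rintro ⟨g, hg, hgA⟩
      exact hM ⟨fun j => f j ∘ g j, fun j => (f j).strictMono.comp (hg j), hgA⟩
    refine le_trans ?_ (ones_le_exd A M' hM')
    unfold ones
    refine card_le_card_of_surjOn (fun t j => f j (t j)) ?_
    intro i hi
    simp only [coe_filter, mem_univ, true_and, Set.mem_ofPred_eq] at hi
    have hex : ∀ j, ∃ t, f j t = i j := fun j => by
      have : i j ∈ Set.range (f j) := by
        rw [Finset.range_orderEmbOfFin]; exact hi.2 j
      exact this
    choose t ht using hex
    have hti : (fun j => f j (t j)) = i := funext ht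
    refine ⟨t, ?_, hti⟩
    simp [M', hti, hi.1]
  have hsum : ∑ S ∈ W, #{i | M i = true ∧ ∀ j, i j ∈ S j} =
      ∑ i with M i = true, ∏ j, #{S ∈ powersetCard m (univ : Finset (Fin (nn j))) | i j ∈ S} := by
    simp_rw [← filter_filter, card_filter _ (filter _ _)]
    rw [sum_comm]
    refine sum_congr rfl fun i _ => ?_
    rw [← card_filter, ← Fintype.card_piFinset]
    congr 1
    ext S
    simp [W, forall_and]
  have hle : ∑ S ∈ W, #{i | M i = true ∧ ∀ j, i j ∈ S j} ≤
      #W * exd (fun _ : Fin d => m) A := by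
    simpa using sum_le_card_nsmul W _ _ hS
  refine Nat.le_of_mul_le_mul_left (?_ : #W * _ ≤ #W * _) hWpos
  calc #W * (ones M * m ^ d)
      = (∑ S ∈ W, #{i | M i = true ∧ ∀ j, i j ∈ S j}) * ∏ j, nn j := by
        rw [hsum, sum_mul]
        simp_rw [← prod_mul_distrib, card_powersetCard_mem hm]
        simp [hWcard, ones, prod_mul_distrib]
        ring
    _ ≤ (#W * exd (fun _ : Fin d => m) A) * ∏ j, nn j := Nat.mul_le_mul_right _ hle
    _ = _ := by ring

/-- The AM-GM inequality with a natural exponent. -/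
theorem prod_le_sum_div_pow {ι : Type*} (s : Finset ι) (hs : s.Nonempty) (z : ι → ℝ)
    (hz : ∀ i ∈ s, 0 ≤ z i) : ∏ i ∈ s, z i ≤ ((∑ i ∈ s, z i) / #s) ^ #s := by
  have hc : (0 : ℝ) < #s := by exact_mod_cast hs.card_pos
  have h := Real.geom_mean_le_arith_mean s (fun _ => 1) z (by simp) (by simpa using hs) hz
  simp only [Real.rpow_one, sum_const, nsmul_eq_mul, mul_one, one_mul] at h
  have h0 : 0 ≤ ∏ i ∈ s, z i := prod_nonneg hz
  calc ∏ i ∈ s, z i = ((∏ i ∈ s, z i) ^ ((#s : ℝ)⁻¹)) ^ #s := by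
        rw [Real.rpow_inv_natCast_pow h0 hs.card_pos.ne']
    _ ≤ _ := pow_le_pow_left₀ (Real.rpow_nonneg h0 _) h _

/-- A bound on the extremal numbers of cubes extends to boxes: with `m` the shortest side, averaging
over subcubes of side `m` gives `ones M ≤ K * ∏ nn j` over the other `e` sides, and AM-GM applies. -/
theorem ones_le_of_cube_bound {e k : ℕ} (he : 0 < e) {nn : Fin (e + 1) → ℕ} (hnn : ∀ j, 0 < nn j)
    (A : (Fin (e + 1) → Fin k) → Bool) (K : ℝ) (hK : 0 ≤ K)
    (hex : ∀ m : ℕ, 0 < m → (exd (fun _ : Fin (e + 1) => m) A : ℝ) ≤ K * (m : ℝ) ^ e)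
    (M : (∀ j, Fin (nn j)) → Bool) (hM : ¬ MatContains M A) :
    (ones M : ℝ) ≤ K * ((∑ j, (nn j : ℝ)) / e) ^ e := by
  obtain ⟨j₀, -, hj₀⟩ := exists_min_image (univ : Finset (Fin (e + 1))) nn univ_nonempty
  have hm : (0 : ℝ) < nn j₀ := by exact_mod_cast hnn j₀
  have h1 : (ones M : ℝ) * (nn j₀ : ℝ) ^ (e + 1) ≤
      exd (fun _ : Fin (e + 1) => nn j₀) A * ∏ j, (nn j : ℝ) := by
    exact_mod_cast ones_mul_pow_le A M hM (hnn j₀) fun j => hj₀ j (mem_univ j)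
  have h2 : (ones M : ℝ) ≤ K * ∏ j ∈ univ.erase j₀, (nn j : ℝ) := by
    rw [← mul_prod_erase univ (fun j => (nn j : ℝ)) (mem_univ j₀)] at h1
    refine le_of_mul_le_mul_right (h1.trans ?_) (pow_pos hm (e + 1))
    calc _ ≤ (K * (nn j₀ : ℝ) ^ e) * (nn j₀ * ∏ j ∈ univ.erase j₀, (nn j : ℝ)) :=
          mul_le_mul_of_nonneg_right (hex _ (hnn j₀)) (by positivity)
      _ = _ := by ring
  have hcard : #(univ.erase j₀ : Finset (Fin (e + 1))) = e := by simp
  have h3 := prod_le_sum_div_pow (univ.erase j₀) (card_pos.1 (by omega)) (fun j => (nn j : ℝ))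
    (fun _ _ => Nat.cast_nonneg _)
  rw [hcard] at h3
  refine h2.trans (mul_le_mul_of_nonneg_left (h3.trans ?_) hK)
  gcongr
  exact erase_subset _ _

/-! ### The traces of a set family on products of chains -/

/-- The bijection `σ` arranges `[n]` into `d` lists, the `j`-th of length `c j`. This is the subset
of `[n]` made of the first `i j` elements of the `j`-th list, for every `j`. -/
def prefixUnion {n d : ℕ} {c : Fin d → ℕ} (σ : Fin n ≃ Σ j, Fin (c j))
    (i : ∀ j, Fin (c j + 1)) : Finset (Fin n) :=
  {x | ((σ x).2 : ℕ) < i (σ x).1}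

theorem prefixUnion_subset_iff {n d : ℕ} {c : Fin d → ℕ} (σ : Fin n ≃ Σ j, Fin (c j))
    (i i' : ∀ j, Fin (c j + 1)) :
    prefixUnion σ i ⊆ prefixUnion σ i' ↔ ∀ j, i j ≤ i' j := by
  constructor
  · intro h j
    by_contra! hlt
    have hlt' : (i' j : ℕ) < i j := hlt
    let y : Σ j, Fin (c j) := ⟨j, ⟨i' j, by have := (i j).2; omega⟩⟩
    have hmem : ∀ t : ∀ j, Fin (c j + 1), σ.symm y ∈ prefixUnion σ t ↔ (y.2 : ℕ) < t y.1 := by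
      intro t
      simp only [prefixUnion, mem_filter, mem_univ, true_and]
      rw [σ.apply_symm_apply]
    exact lt_irrefl _ ((hmem i').1 (h ((hmem i).2 hlt')))
  · intro h x hx
    simp only [prefixUnion, mem_filter, mem_univ, true_and] at hx ⊢
    exact hx.trans_le (h _)

/-- The hypermatrix recording which unions of initial segments of the lists given by `σ` belong
to `F`. -/
def traceMatrix {n d : ℕ} {c : Fin d → ℕ} (F : Finset (Finset (Fin n)))
    (σ : Fin n ≃ Σ j, Fin (c j)) : (∀ j, Fin (c j + 1)) → Bool :=
  fun i => decide (prefixUnion σ i ∈ F)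

/-- A copy of `A` in the trace of `F` is an induced copy of `P` in `F`. Non-comparability is preserved
because distinct 1-entries of a permutation matrix differ in every coordinate, so that `¬ p < q`
with `p ≠ q` forces some coordinate of `p` to be strictly larger. -/
theorem not_matContains_traceMatrix {d : ℕ} (hd : 0 < d) {P : Type} [PartialOrder P] [Fintype P]
    {A : (Fin d → Fin (Fintype.card P)) → Bool} (hA : IsPermMatrix A)
    {β : P → (Fin d → Fin (Fintype.card P))} (hβinj : Function.Injective β)
    (hβbij : ∀ i, A i = true ↔ ∃ p, β p = i)
    (hβord : ∀ p p' : P, p < p' ↔ ∀ j, β p j < β p' j)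
    {n : ℕ} {F : Finset (Finset (Fin n))} (hF : ¬ ContainsInduced P F)
    {c : Fin d → ℕ} (σ : Fin n ≃ Σ j, Fin (c j)) :
    ¬ MatContains (traceMatrix F σ) A := by
  rintro ⟨f, hf, hfA⟩
  have hle : ∀ x y : P, prefixUnion σ (fun j => f j (β x j)) ⊆
      prefixUnion σ (fun j => f j (β y j)) ↔ ∀ j, β x j ≤ β y j := fun x y => by
    rw [prefixUnion_subset_iff]
    exact forall_congr' fun j => (hf j).le_iff_le
  have hcoord : ∀ x y : P, ∀ j, β x j = β y j → x = y := fun x y j h =>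
    hβinj ((hA.2 j (β y j)).unique ⟨(hβbij _).2 ⟨x, rfl⟩, h⟩ ⟨(hβbij _).2 ⟨y, rfl⟩, rfl⟩)
  refine hF ⟨fun p => prefixUnion σ fun j => f j (β p j), ?_, ?_, ?_⟩
  · intro x y hxy
    have h1 := (hle x y).1 hxy.subset
    have h2 := (hle y x).1 hxy.symm.subset
    exact hβinj (funext fun j => le_antisymm (h1 j) (h2 j))
  · intro p
    simpa [traceMatrix] using hfA (β p) ((hβbij _).2 ⟨p, rfl⟩)
  · intro x y
    rw [hβord, Finset.ssubset_def, hle, hle]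
    constructor
    · intro h
      exact ⟨fun j => (h j).le, fun h' => absurd (h' ⟨0, hd⟩) (h ⟨0, hd⟩).not_ge⟩
    · rintro ⟨h, h'⟩ j
      refine lt_of_le_of_ne (h j) fun hj => h' ?_
      rw [hcoord x y j hj]
      exact fun _ => le_rfl

/-! ### Double counting -/

theorem card_prefixUnion_eq {n d : ℕ} {c : Fin d → ℕ} (hc : ∑ j, c j = n)
    (i : ∀ j, Fin (c j + 1)) (S : Finset (Fin n)) (hi : ∑ j, (i j : ℕ) = #S) :
    #{σ : Fin n ≃ Σ j, Fin (c j) | prefixUnion σ i = S} = (#S)! * (n - #S)! := by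
  classical
  let T : Finset (Σ j, Fin (c j)) := univ.sigma fun j => {t | (t : ℕ) < i j}
  have hT : #T = #S := by
    rw [← hi, card_sigma]
    refine sum_congr rfl fun j _ => ?_
    rw [Fin.card_filter_val_lt]
    have := (i j).2
    omega
  have h := card_equiv_mapping (X := Fin n) (Y := Σ j, Fin (c j)) (by simp [hc]) S T hT.symm
  rw [Fintype.card_fin] at h
  rw [← h]
  congr 1
  ext σ
  simp only [mem_filter, mem_univ, true_and, Finset.ext_iff, prefixUnion, T, mem_sigma]
  exact forall_congr' fun x => Iff.comm

/-- A pair of weak compositions `(a, b)` of `k` and `n - k` gives the list lengths `c = a + b`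
together with the grid point `a`. -/
theorem card_splittings_le (e n k : ℕ) (hk : k ≤ n) :
    (k + e).choose e * (n - k + e).choose e ≤
      ∑ c ∈ piAntidiag (univ : Finset (Fin (e + 1))) n,
        #{i : ∀ j, Fin (c j + 1) | ∑ j, (i j : ℕ) = k} := by
  rw [← card_piAntidiag_fin, ← card_piAntidiag_fin, ← card_product, ← card_sigma]
  refine card_le_card_of_surjOn (fun x => (fun j => (x.2 j : ℕ), fun j => x.1 j - x.2 j)) ?_
  rintro ⟨a, b⟩ hab
  simp only [coe_product, Set.mem_prod, mem_coe, mem_piAntidiag, mem_univ, implies_true,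
    and_true] at hab
  refine ⟨⟨a + b, fun j => ⟨a j, by simp⟩⟩, ?_, ?_⟩
  · simp only [mem_coe, mem_sigma, mem_piAntidiag, mem_univ, implies_true, and_true, mem_filter,
      true_and, Pi.add_apply, sum_add_distrib]
    exact ⟨by rw [hab.1, hab.2]; omega, hab.1⟩
  · simp

/-- Double counting of the triples `(c, σ, i)` for which `prefixUnion σ i ∈ F`. -/
theorem sum_factorial_le {e n : ℕ} (F : Finset (Finset (Fin n))) :
    ∑ S ∈ F, (#S + e).choose e * (n - #S + e).choose e * ((#S)! * (n - #S)!) ≤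
      ∑ c ∈ piAntidiag (univ : Finset (Fin (e + 1))) n, ∑ σ : Fin n ≃ Σ j, Fin (c j),
        ones (traceMatrix F σ) := by
  have hones : ∀ c : Fin (e + 1) → ℕ, ∑ σ : Fin n ≃ Σ j, Fin (c j), ones (traceMatrix F σ) =
      ∑ S ∈ F, ∑ i : ∀ j, Fin (c j + 1), #{σ : Fin n ≃ Σ j, Fin (c j) | prefixUnion σ i = S} := by
    intro c
    have : ∀ σ : Fin n ≃ Σ j, Fin (c j), ones (traceMatrix F σ) =
        ∑ S ∈ F, ∑ i : ∀ j, Fin (c j + 1), if prefixUnion σ i = S then 1 else 0 := by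
      intro σ
      rw [sum_comm]
      simp_rw [sum_ite_eq]
      rw [ones, card_filter]
      simp only [traceMatrix, decide_eq_true_eq]
    simp_rw [this]
    rw [sum_comm]
    refine sum_congr rfl fun S _ => ?_
    rw [sum_comm]
    simp_rw [card_filter]
  simp_rw [hones]
  rw [sum_comm]
  refine sum_le_sum fun S _ => ?_
  have hS : #S ≤ n := by simpa using S.card_le_univ
  refine (Nat.mul_le_mul_right _ (card_splittings_le e n #S hS)).trans ?_
  rw [sum_mul]
  refine sum_le_sum fun c hc => ?_
  rw [← smul_eq_mul, ← sum_const]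
  refine le_trans (le_of_eq ?_) (sum_le_sum_of_subset
    (filter_subset (fun i : ∀ j, Fin (c j + 1) => ∑ j, (i j : ℕ) = #S) univ))
  refine sum_congr rfl fun i hi => ?_
  rw [card_prefixUnion_eq (mem_piAntidiag.1 hc).1 i S (mem_filter.1 hi).2]

theorem choose_mul_factorial_eq (e n k : ℕ) (hk : k ≤ n) :
    (((k + e).choose e * (n - k + e).choose e * (k ! * (n - k)!) : ℕ) : ℝ) =
      ((n + 2 * e)! / (e ! : ℝ) ^ 2) * (1 / ((n + 2 * e).choose (k + e))) := by
  obtain ⟨l, rfl⟩ := Nat.exists_eq_add_of_le hk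
  rw [Nat.add_sub_cancel_left]
  have h1 := Nat.add_choose_mul_factorial_mul_factorial k e
  have h2 := Nat.add_choose_mul_factorial_mul_factorial l e
  have h3 := Nat.add_choose_mul_factorial_mul_factorial (k + e) (l + e)
  rw [show k + e + (l + e) = k + l + 2 * e by ring] at h3
  rw [← Nat.choose_symm_of_eq_add (show k + l + 2 * e = (k + e) + (l + e) by ring)] at h3
  have hpos : (0 : ℝ) < ((k + l + 2 * e).choose (k + e)) := by
    exact_mod_cast Nat.choose_pos (by omega)
  have hepos : (0 : ℝ) < e ! := by exact_mod_cast Nat.factorial_pos e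
  rw [div_mul_div_comm, eq_div_iff (by positivity), mul_one]
  norm_cast
  rw [← h3, ← h1, ← h2]
  ring

/-- Under the same hypotheses as Statement 7, every induced `P`-free
family `F` of subsets of `[n]` satisfies the shifted Lubell bound
`∑_{F ∈ F} 1 / C(n+2d−2, |F|+d−1) ≤ K·(d−1)!/(d−1)^(d−1)`. -/
theorem stmt_8 (d : ℕ) (hd : 2 ≤ d) (P : Type) [PartialOrder P] [Fintype P]
    (A : (Fin d → Fin (Fintype.card P)) → Bool) (hA : IsPermMatrix A)
    (β : P → (Fin d → Fin (Fintype.card P))) (hβinj : Function.Injective β)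
    (hβbij : ∀ i, A i = true ↔ ∃ p, β p = i)
    (hβord : ∀ p p' : P, p < p' ↔ ∀ j, β p j < β p' j)
    (K : ℝ) (hK : 0 ≤ K)
    (hex : ∀ m : ℕ, 0 < m → (exd (fun _ : Fin d => m) A : ℝ) ≤ K * (m : ℝ) ^ (d - 1))
    (n : ℕ) (F : Finset (Finset (Fin n))) (hF : ¬ ContainsInduced P F) :
    ∑ S ∈ F, (1 : ℝ) / ((n + 2 * d - 2).choose (S.card + d - 1)) ≤
      K * (Nat.factorial (d - 1)) / ((d : ℝ) - 1) ^ (d - 1) := by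
  obtain ⟨e, rfl⟩ : ∃ e, d = e + 1 := ⟨d - 1, by omega⟩
  have he : 0 < e := by omega
  have heR : (0 : ℝ) < e := by exact_mod_cast he
  simp only [Nat.add_sub_cancel] at hex ⊢
  rw [show ((e + 1 : ℕ) : ℝ) - 1 = e by push_cast; ring]
  simp_rw [show n + 2 * (e + 1) - 2 = n + 2 * e by omega,
    show ∀ s : ℕ, s + (e + 1) - 1 = s + e from fun s => by omega]
  have hones : ∀ c ∈ piAntidiag (univ : Finset (Fin (e + 1))) n, ∀ σ : Fin n ≃ Σ j, Fin (c j),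
      (ones (traceMatrix F σ) : ℝ) ≤ K * (((n + e + 1 : ℕ) : ℝ) / e) ^ e := by
    intro c hc σ
    have h := ones_le_of_cube_bound he (fun j => Nat.succ_pos (c j)) A K hK hex
      (traceMatrix F σ) (not_matContains_traceMatrix (by omega) hA hβinj hβbij hβord hF σ)
    have hs : ∑ j, ((c j + 1 : ℕ) : ℝ) = ((n + e + 1 : ℕ) : ℝ) := by
      rw [← (mem_piAntidiag.1 hc).1, ← Nat.cast_sum, sum_add_distrib]
      simp [add_assoc]
    rwa [hs] at h
  have htotal : ((∑ c ∈ piAntidiag (univ : Finset (Fin (e + 1))) n,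
      ∑ σ : Fin n ≃ Σ j, Fin (c j), ones (traceMatrix F σ) : ℕ) : ℝ) ≤
      (n + e).choose e * (n ! * (K * (((n + e + 1 : ℕ) : ℝ) / e) ^ e)) := by
    push_cast only [Nat.cast_sum]
    rw [← card_piAntidiag_fin, ← nsmul_eq_mul]
    refine sum_le_card_nsmul _ _ _ fun c hc => ?_
    have hcard : Fintype.card (Fin n ≃ Σ j, Fin (c j)) = n ! := by
      have h : Fintype.card (Fin n) = Fintype.card (Σ j, Fin (c j)) := by
        simp [← (mem_piAntidiag.1 hc).1]
      rw [Fintype.card_equiv (Fintype.equivOfCardEq h), Fintype.card_fin]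
    rw [← hcard, ← nsmul_eq_mul]
    exact sum_le_card_nsmul _ _ _ fun σ _ => hones c hc σ
  have hmain := (Nat.cast_le (α := ℝ)).2 (sum_factorial_le (e := e) F)
  have hlhs : ((∑ S ∈ F, (#S + e).choose e * (n - #S + e).choose e * ((#S)! * (n - #S)!) : ℕ) : ℝ)
      = ((n + 2 * e)! / (e ! : ℝ) ^ 2) *
        ∑ S ∈ F, (1 : ℝ) / ((n + 2 * e).choose (#S + e)) := by
    rw [Nat.cast_sum, mul_sum]
    exact sum_congr rfl fun S _ =>
      choose_mul_factorial_eq e n #S (by simpa using S.card_le_univ)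
  rw [hlhs] at hmain
  have hep : (0 : ℝ) < e ! := by exact_mod_cast Nat.factorial_pos e
  have hNp : (0 : ℝ) < (n + 2 * e)! := by exact_mod_cast Nat.factorial_pos _
  refine le_of_mul_le_mul_left ((hmain.trans htotal).trans ?_)
    (show 0 < ((n + 2 * e)! / (e ! : ℝ) ^ 2) by positivity)
  have hch : ((n + e).choose e : ℝ) * n ! = (n + e)! / e ! := by
    rw [eq_div_iff hep.ne']
    have := Nat.add_choose_mul_factorial_mul_factorial n e
    exact_mod_cast this
  have hfac : ((n + e)! : ℝ) * ((n + e + 1 : ℕ) : ℝ) ^ e ≤ (n + 2 * e)! := by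
    have := Nat.factorial_mul_pow_le_factorial (m := n + e) (n := e)
    rw [show n + e + e = n + 2 * e by ring] at this
    exact_mod_cast this
  calc ((n + e).choose e : ℝ) * (n ! * (K * (((n + e + 1 : ℕ) : ℝ) / e) ^ e))
      = (K / (e ! * (e : ℝ) ^ e)) * ((n + e)! * ((n + e + 1 : ℕ) : ℝ) ^ e) := by
        rw [← mul_assoc, hch, div_pow]
        field_simp
    _ ≤ (K / (e ! * (e : ℝ) ^ e)) * (n + 2 * e)! :=
        mul_le_mul_of_nonneg_left hfac (by positivity)
    _ = _ := by field_simp
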